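/- Assume in addition that the diffusion coefficients are independent of the spatial variable (Q = Q(t)), that c ≡ 0, and that r̂₀ := sup_{I×ℝ^d} r₀ < +∞. Then for every s ∈ I, every f ∈ C¹_b(ℝ^d), every classical solution u bounded on strips with datum f, and every classical solution v bounded on strips with datum |∇f|, one has |∇_x u(t,x)| ≤ e^{r̂₀(t−s)}·v(t,x) for all t > s and x ∈ ℝ^d. -/

import Mathlib

open Set Filter MeasureTheory

noncomputable section

abbrev Euc (d : ℕ) := EuclideanSpace ℝ (Fin d)

noncomputable def hess (d : ℕ) (g : Euc d → ℝ) (x : Euc d) (i j : Fin d) : ℝ :=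
  fderiv ℝ (fun y => fderiv ℝ g y (EuclideanSpace.single j 1)) x (EuclideanSpace.single i 1)

noncomputable def minEig (d : ℕ) (A : Fin d → Fin d → ℝ) : ℝ :=
  sInf {r : ℝ | ∃ ξ : Euc d, ‖ξ‖ = 1 ∧ (∑ i, ∑ j, A i j * ξ i * ξ j) = r}

noncomputable def pdist (d : ℕ) (p q : ℝ × Euc d) : ℝ :=
  Real.sqrt |p.1 - q.1| + ‖p.2 - q.2‖

def LocHolderParab (d : ℕ) (α : ℝ) (I : Set ℝ) (g : ℝ → Euc d → ℝ) : Prop :=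
  ∀ K : Set (ℝ × Euc d), IsCompact K → K ⊆ I ×ˢ (univ : Set (Euc d)) →
    ∃ C > 0, ∀ p ∈ K, ∀ q ∈ K, |g p.1 p.2 - g q.1 q.2| ≤ C * pdist d p q ^ α

noncomputable def Aop (d : ℕ) (Q : ℝ → Euc d → Fin d → Fin d → ℝ)
    (b : ℝ → Euc d → Fin d → ℝ) (c : ℝ → Euc d → ℝ)
    (t : ℝ) (g : Euc d → ℝ) (x : Euc d) : ℝ :=
  (∑ i, ∑ j, Q t x i j * hess d g x i j)
    + (∑ i, b t x i * fderiv ℝ g x (EuclideanSpace.single i 1))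
    + c t x * g x

structure IsClassicalSolution (d : ℕ) (Q : ℝ → Euc d → Fin d → Fin d → ℝ)
    (b : ℝ → Euc d → Fin d → ℝ) (c : ℝ → Euc d → ℝ)
    (s : ℝ) (f : Euc d → ℝ) (u : ℝ → Euc d → ℝ) : Prop where
  cont : ContinuousOn (fun p : ℝ × Euc d => u p.1 p.2) (Ici s ×ˢ univ)
  tdiff : ∀ t, s < t → ∀ x, DifferentiableAt ℝ (fun τ => u τ x) t
  tderiv_cont : ContinuousOn (fun p : ℝ × Euc d => deriv (fun τ => u τ p.2) p.1) (Ioi s ×ˢ univ)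
  xdiff : ∀ t, s < t → ContDiff ℝ 2 (u t)
  grad_cont : ContinuousOn (fun p : ℝ × Euc d => fderiv ℝ (u p.1) p.2) (Ioi s ×ˢ univ)
  hess_cont : ContinuousOn (fun p : ℝ × Euc d => hess d (u p.1) p.2) (Ioi s ×ˢ univ)
  pde : ∀ t, s < t → ∀ x, deriv (fun τ => u τ x) t = Aop d Q b c t (u t) x
  init : ∀ x, u s x = f x

def BoundedOnStrips (d : ℕ) (s : ℝ) (u : ℝ → Euc d → ℝ) : Prop :=
  ∀ T, s < T → ∃ M, ∀ t ∈ Icc s T, ∀ x, |u t x| ≤ M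

def LocBddOn (I : Set ℝ) (g : ℝ → ℝ) : Prop :=
  ∀ a b : ℝ, Icc a b ⊆ I → ∃ M, ∀ t ∈ Icc a b, |g t| ≤ M

/-!
The gradient bound is obtained by doubling the variables. Since `Q` does not depend on `x`, the
solution can be driven from two points `x` and `y` by the same noise; then `x - y` has no diffusion,
and the one-sided Lipschitz bound on `b` makes `R = e^{r(t - s)} ‖x - y‖` a supersolution of the
coupled equation which is constant along its diffusion directions. For such an `R` the product rule
has no cross term, so with the nonnegative supersolution `W = v + ε e^{(λ + 1)(t - s)} φ`, where `φ`
is the Lyapunov function with rate `λ`, the function `R (W + C R) - (u(t, x) - u(t, y))` is a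
supersolution off the diagonal; on the diagonal it vanishes.
For `C` large it is nonnegative at `t = s`: near the diagonal because `|∇f| ≤ v(s, ·)`, the coercive
`ε φ` absorbing the lack of uniform continuity of `∇f`, and away from it because `f` is bounded.
The weak minimum principle makes it nonnegative at all times; dividing by `‖x - y‖`, letting
`y → x` and then `ε → 0` gives the estimate.
-/

open scoped Topology

section ParabolicCalculus

variable {E E' ι : Type*} [AddCommGroup E] [Module ℝ E] [AddCommGroup E'] [Module ℝ E'] [Fintype ι]

/-- The second directional derivative of `f` at `x` along `v` exists and equals `f''`; the
second-order analogue of `HasLineDerivAt`. -/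
def HasSecondLineDerivAt (f : E → ℝ) (f'' : ℝ) (x v : E) : Prop :=
  ∃ f' : ℝ → ℝ, (∀ᶠ τ in 𝓝 0, HasDerivAt (fun σ => f (x + σ • v)) (f' τ) τ) ∧
    HasDerivAt f' f'' 0

namespace HasSecondLineDerivAt

variable {f g : E → ℝ} {f'' g'' : ℝ} {x v : E}

theorem unique {f₁'' f₂'' : ℝ} (h₁ : HasSecondLineDerivAt f f₁'' x v)
    (h₂ : HasSecondLineDerivAt f f₂'' x v) : f₁'' = f₂'' := by
  obtain ⟨f₁', hf₁', hf₁''⟩ := h₁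
  obtain ⟨f₂', hf₂', hf₂''⟩ := h₂
  have heq : f₁' =ᶠ[𝓝 0] f₂' := hf₁'.mp (hf₂'.mono fun τ h₂ h₁ => h₁.unique h₂)
  exact hf₁''.unique (hf₂''.congr_of_eventuallyEq heq)

theorem of_invariant (h : ∀ τ : ℝ, f (x + τ • v) = f x) : HasSecondLineDerivAt f 0 x v := by
  refine ⟨0, .of_forall fun τ => ?_, hasDerivAt_const 0 0⟩
  simpa only [h] using! hasDerivAt_const τ (f x)

theorem add (hf : HasSecondLineDerivAt f f'' x v) (hg : HasSecondLineDerivAt g g'' x v) :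
    HasSecondLineDerivAt (fun y => f y + g y) (f'' + g'') x v := by
  obtain ⟨f', hf', hf''⟩ := hf
  obtain ⟨g', hg', hg''⟩ := hg
  exact ⟨fun τ => f' τ + g' τ, hf'.mp (hg'.mono fun τ hg hf => hf.add hg), hf''.add hg''⟩

theorem neg (hf : HasSecondLineDerivAt f f'' x v) :
    HasSecondLineDerivAt (fun y => -f y) (-f'') x v := by
  obtain ⟨f', hf', hf''⟩ := hf
  exact ⟨fun τ => -f' τ, hf'.mono fun τ hf => hf.neg, hf''.neg⟩

theorem mul_of_invariant (hf : ∀ τ : ℝ, f (x + τ • v) = f x)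
    (hg : HasSecondLineDerivAt g g'' x v) :
    HasSecondLineDerivAt (fun y => f y * g y) (f x * g'') x v := by
  obtain ⟨g', hg', hg''⟩ := hg
  refine ⟨fun τ => f x * g' τ, hg'.mono fun τ hg => ?_, hg''.const_mul (f x)⟩
  simpa only [hf] using! hg.const_mul (f x)

theorem comp_linearMap {f : E' → ℝ} {A : E →ₗ[ℝ] E'}
    (hf : HasSecondLineDerivAt f f'' (A x) (A v)) :
    HasSecondLineDerivAt (fun y => f (A y)) f'' x v := by
  simpa only [HasSecondLineDerivAt, map_add, map_smul] using hf

theorem nonneg_of_forall_le (hf : HasSecondLineDerivAt f f'' x v) (hmin : ∀ y, f x ≤ f y) :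
    0 ≤ f'' := by
  obtain ⟨f', hf', hf''⟩ := hf
  by_contra! hneg
  set line : ℝ → ℝ := fun τ => f (x + τ • v)
  have hderiv : deriv line =ᶠ[𝓝 0] f' := hf'.mono fun τ h => h.deriv
  have hderiv₂ : deriv (deriv line) 0 = f'' := hderiv.deriv_eq.trans hf''.deriv
  have hlocmin : IsLocalMin line 0 := .of_forall fun τ => by simpa [line] using hmin (x + τ • v)
  have hlocmax : IsLocalMax line 0 :=
    isLocalMax_of_deriv_deriv_neg (by rwa [hderiv₂]) hlocmin.deriv_eq_zero
      hf'.self_of_nhds.continuousAt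
  -- Being both a minimum and a maximum, `line` is locally constant, so `f'' = 0`.
  have hconst : line =ᶠ[𝓝 0] fun _ => line 0 :=
    hlocmin.mp (hlocmax.mono fun τ hle hge => le_antisymm hle hge)
  have hzero : deriv (deriv line) 0 = 0 := by
    rw [hconst.deriv.deriv_eq]
    simp
  linarith

end HasSecondLineDerivAt

theorem hasDerivAt_nonpos_of_isMinOn_Icc_right {g : ℝ → ℝ} {g' s t : ℝ} (hg : HasDerivAt g g' t)
    (hst : s < t) (hmin : IsMinOn g (Icc s t) t) : g' ≤ 0 := by
  have hcone : s - t ∈ posTangentConeAt (Icc s t) t :=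
    sub_mem_posTangentConeAt_of_segment_subset
      ((convex_Icc s t).segment_subset (right_mem_Icc.2 hst.le) (left_mem_Icc.2 hst.le))
  have hmul : 0 ≤ (s - t) * g' := by
    simpa using hmin.localize.hasFDerivWithinAt_nonneg hg.hasFDerivAt.hasFDerivWithinAt hcone
  nlinarith

/-- The operator `∂_t - ∑ k, ∂²_{ξ k} - ∂_β`, applied to `F` at `(t, z)`, is defined and equals `m`.
A parabolic operator with diffusion matrix `∑ k, ξ k ⊗ ξ k` and drift `β` has this form once its
coefficients are frozen at the point `(t, z)`. -/
def HasParabolicDerivAt (β : E) (ξ : ι → E) (F : ℝ → E → ℝ) (m t : ℝ) (z : E) : Prop :=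
  ∃ (Ft Fβ : ℝ) (Fξ : ι → ℝ), HasDerivAt (fun τ => F τ z) Ft t ∧ HasLineDerivAt ℝ (F t) Fβ z β ∧
    (∀ k, HasSecondLineDerivAt (F t) (Fξ k) z (ξ k)) ∧ Ft - ∑ k, Fξ k - Fβ = m

namespace HasParabolicDerivAt

variable {β : E} {ξ : ι → E} {F G : ℝ → E → ℝ} {m n t : ℝ} {z : E}

theorem of_time {e : ℝ → ℝ} (he : HasDerivAt e m t) :
    HasParabolicDerivAt β ξ (fun τ _ => e τ) m t z :=
  ⟨m, 0, 0, he, hasDerivAt_const _ _, fun _ => .of_invariant fun _ => rfl, by simp⟩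

theorem add (hF : HasParabolicDerivAt β ξ F m t z) (hG : HasParabolicDerivAt β ξ G n t z) :
    HasParabolicDerivAt β ξ (fun τ y => F τ y + G τ y) (m + n) t z := by
  obtain ⟨Ft, Fβ, Fξ, hFt, hFβ, hFξ, rfl⟩ := hF
  obtain ⟨Gt, Gβ, Gξ, hGt, hGβ, hGξ, rfl⟩ := hG
  refine ⟨_, _, fun k => Fξ k + Gξ k, hFt.add hGt, HasDerivAt.add hFβ hGβ,
    fun k => (hFξ k).add (hGξ k), ?_⟩
  rw [Finset.sum_add_distrib]
  ring

theorem neg (hF : HasParabolicDerivAt β ξ F m t z) :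
    HasParabolicDerivAt β ξ (fun τ y => -F τ y) (-m) t z := by
  obtain ⟨Ft, Fβ, Fξ, hFt, hFβ, hFξ, rfl⟩ := hF
  refine ⟨_, _, fun k => -Fξ k, hFt.neg, HasDerivAt.neg hFβ, fun k => (hFξ k).neg, ?_⟩
  rw [Finset.sum_neg_distrib]
  ring

theorem sub (hF : HasParabolicDerivAt β ξ F m t z) (hG : HasParabolicDerivAt β ξ G n t z) :
    HasParabolicDerivAt β ξ (fun τ y => F τ y - G τ y) (m - n) t z := by
  simpa only [sub_eq_add_neg] using hF.add hG.neg

-- The cross terms `2 ∑ k, ∂_{ξ k} F * ∂_{ξ k} G` of the general product rule vanish here.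
theorem mul_of_invariant (hinv : ∀ k (τ : ℝ), F t (z + τ • ξ k) = F t z)
    (hF : HasParabolicDerivAt β ξ F m t z) (hG : HasParabolicDerivAt β ξ G n t z) :
    HasParabolicDerivAt β ξ (fun τ y => F τ y * G τ y) (m * G t z + F t z * n) t z := by
  obtain ⟨Ft, Fβ, Fξ, hFt, hFβ, hFξ, rfl⟩ := hF
  obtain ⟨Gt, Gβ, Gξ, hGt, hGβ, hGξ, rfl⟩ := hG
  have hFξ_zero (k : ι) : Fξ k = 0 := (hFξ k).unique (.of_invariant (hinv k))
  refine ⟨_, _, fun k => F t z * Gξ k, hFt.mul hGt, HasDerivAt.mul hFβ hGβ,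
    fun k => (hGξ k).mul_of_invariant (hinv k), ?_⟩
  simp only [hFξ_zero, ← Finset.mul_sum, Finset.sum_const_zero, zero_smul, add_zero]
  ring

theorem comp_linearMap {F : ℝ → E' → ℝ} {A : E →ₗ[ℝ] E'}
    (hF : HasParabolicDerivAt (A β) (fun k => A (ξ k)) F m t (A z)) :
    HasParabolicDerivAt β ξ (fun τ y => F τ (A y)) m t z := by
  obtain ⟨Ft, Fβ, Fξ, hFt, hFβ, hFξ, rfl⟩ := hF
  refine ⟨Ft, Fβ, Fξ, hFt, ?_, fun k => (hFξ k).comp_linearMap, rfl⟩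
  simpa only [HasLineDerivAt, map_add, map_smul] using hFβ

theorem comp_fst (hF : HasParabolicDerivAt β ξ F m t z) (β' : E') (ξ' : ι → E') (z' : E') :
    HasParabolicDerivAt (β, β') (fun k => (ξ k, ξ' k)) (fun τ p => F τ p.1) m t (z, z') :=
  .comp_linearMap (A := LinearMap.fst ℝ E E') hF

theorem comp_snd (hF : HasParabolicDerivAt β ξ F m t z) (β' : E') (ξ' : ι → E') (z' : E') :
    HasParabolicDerivAt (β', β) (fun k => (ξ' k, ξ k)) (fun τ p => F τ p.2) m t (z', z) :=
  .comp_linearMap (A := LinearMap.snd ℝ E' E) hF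

theorem nonpos_of_forall_le {s : ℝ} (hF : HasParabolicDerivAt β ξ F m t z) (hst : s < t)
    (hmin : ∀ τ ∈ Icc s t, ∀ y, F t z ≤ F τ y) : m ≤ 0 := by
  obtain ⟨Ft, Fβ, Fξ, hFt, hFβ, hFξ, rfl⟩ := hF
  have hmin_t := hmin t (right_mem_Icc.2 hst.le)
  have htime : Ft ≤ 0 := hasDerivAt_nonpos_of_isMinOn_Icc_right hFt hst fun τ hτ => hmin τ hτ z
  have hdrift : Fβ = 0 :=
    IsLocalMin.hasDerivAt_eq_zero (.of_forall fun τ => by simpa using hmin_t (z + τ • β)) hFβ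
  have hdiffusion : 0 ≤ ∑ k, Fξ k :=
    Finset.sum_nonneg fun k _ => (hFξ k).nonneg_of_forall_le hmin_t
  linarith

end HasParabolicDerivAt
end ParabolicCalculus

section MinimumPrinciple

theorem le_of_forall_pos_le_add_mul {a b c : ℝ} (h : ∀ η > 0, a ≤ b + η * c) : a ≤ b := by
  have hlim : Tendsto (fun η : ℝ => b + η * c) (𝓝[>] 0) (𝓝 (b + 0 * c)) :=
    (Continuous.tendsto (by fun_prop) 0).mono_left nhdsWithin_le_nhds
  rw [zero_mul, add_zero] at hlim
  exact ge_of_tendsto hlim (eventually_mem_nhdsWithin.mono h)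

theorem exists_isMinOn_prod_univ {X Y : Type*} [TopologicalSpace X] [T2Space X]
    [TopologicalSpace Y] {K : Set X} (hK : IsCompact K) {F : X × Y → ℝ}
    (hF : ContinuousOn F (K ×ˢ univ)) {Ψ : Y → ℝ} (hΨ : Tendsto Ψ (cocompact Y) atTop)
    (hΨF : ∀ p ∈ K ×ˢ univ, Ψ p.2 ≤ F p) {p₀ : X × Y} (hp₀ : p₀ ∈ K ×ˢ univ) :
    ∃ p ∈ K ×ˢ univ, IsMinOn F (K ×ˢ univ) p := by
  refine hF.exists_isMinOn' (hK.isClosed.prod isClosed_univ) hp₀ ?_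
  obtain ⟨L, hL, hLΨ⟩ := mem_cocompact.1 (hΨ.eventually_ge_atTop (F p₀))
  rw [eventually_inf_principal]
  filter_upwards [(hK.prod hL).compl_mem_cocompact] with p hp hpK
  exact (hLΨ fun hpL => hp ⟨hpK.1, hpL⟩).trans (hΨF p hpK)

theorem hasDerivAt_exp_const_mul_sub (k s t : ℝ) :
    HasDerivAt (fun τ => Real.exp (k * (τ - s))) (k * Real.exp (k * (t - s))) t := by
  simpa [mul_comm] using (((hasDerivAt_id t).sub_const s).const_mul k).exp

variable {E ι : Type*} [AddCommGroup E] [Module ℝ E] [Fintype ι]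

theorem HasParabolicDerivAt.exists_pos_add_exp_mul {β : E} {ξ : ι → E} {F : ℝ → E → ℝ} {Φ : E → ℝ}
    {m l s t lam κ η : ℝ} {z : E} (hF : HasParabolicDerivAt β ξ F m t z) (hm : 0 ≤ m)
    (hΦ : HasParabolicDerivAt β ξ (fun _ => Φ) l t z) (hl : -(lam * Φ z) ≤ l)
    (hΦ_pos : 0 < Φ z) (hη : 0 < η) (hκ : lam < κ) :
    ∃ m' > 0, HasParabolicDerivAt β ξ
      (fun τ y => F τ y + η * (Real.exp (κ * (τ - s)) * Φ y)) m' t z := by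
  refine ⟨_, ?_, hF.add (.mul_of_invariant (fun _ _ => rfl) (.of_time (hasDerivAt_const t η))
    (.mul_of_invariant (fun _ _ => rfl) (.of_time (hasDerivAt_exp_const_mul_sub κ s t)) hΦ))⟩
  have hstrict : 0 < κ * Φ z + l := by linarith [mul_lt_mul_of_pos_right hκ hΦ_pos]
  have := mul_pos (mul_pos hη (Real.exp_pos (κ * (t - s)))) hstrict
  linarith

variable [TopologicalSpace E]

theorem nonneg_of_parabolic_supersolution {F : ℝ → E → ℝ} {Φ : E → ℝ} {s T lam M : ℝ}
    (hF : ContinuousOn (fun p : ℝ × E => F p.1 p.2) (Icc s T ×ˢ univ))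
    (hbound : ∀ t ∈ Icc s T, ∀ z, M ≤ F t z) (hinit : ∀ z, 0 ≤ F s z)
    (hΦ : Continuous Φ) (hΦ_pos : ∀ z, 0 < Φ z) (hΦ_lim : Tendsto Φ (cocompact E) atTop)
    (hsuper : ∀ t ∈ Ioc s T, ∀ z, F t z < 0 → ∃ (β : E) (ξ : ι → E) (m l : ℝ),
      HasParabolicDerivAt β ξ F m t z ∧ 0 ≤ m ∧
      HasParabolicDerivAt β ξ (fun _ => Φ) l t z ∧ -(lam * Φ z) ≤ l) :
    ∀ t ∈ Icc s T, ∀ z, 0 ≤ F t z := by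
  set e : ℝ → ℝ := fun t => Real.exp ((|lam| + 1) * (t - s))
  suffices hpert : ∀ η > 0, ∀ t ∈ Icc s T, ∀ z, 0 ≤ F t z + η * (e t * Φ z) from
    fun t ht z => le_of_forall_pos_le_add_mul fun η hη => hpert η hη t ht z
  intro η hη t₀ ht₀ z₀
  by_contra! hneg
  have hlower : ∀ p ∈ Icc s T ×ˢ univ, M + η * Φ p.2 ≤ F p.1 p.2 + η * (e p.1 * Φ p.2) := by
    rintro ⟨t, z⟩ ⟨ht, -⟩
    have he_one : 1 ≤ e t :=
      Real.one_le_exp (mul_nonneg (by positivity) (sub_nonneg.2 ht.1))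
    gcongr
    · exact hbound t ht z
    · exact le_mul_of_one_le_left (hΦ_pos z).le he_one
  obtain ⟨⟨t, z⟩, ⟨ht, -⟩, hmin⟩ := exists_isMinOn_prod_univ isCompact_Icc
    (hF.add (Continuous.continuousOn (by fun_prop)))
    (tendsto_atTop_add_const_left _ M (hΦ_lim.const_mul_atTop hη)) hlower
    (p₀ := (t₀, z₀)) ⟨ht₀, mem_univ _⟩
  have hpert_neg : F t z + η * (e t * Φ z) < 0 :=
    (hmin (a := (t₀, z₀)) ⟨ht₀, mem_univ _⟩).trans_lt hneg
  have hpos : 0 < η * (e t * Φ z) := mul_pos hη (mul_pos (Real.exp_pos _) (hΦ_pos z))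
  have hst : s < t := ht.1.lt_of_ne fun hst => by
    subst hst
    linarith [hinit z]
  obtain ⟨β, ξ, m, l, hFm, hm, hΦl, hl⟩ := hsuper t ⟨hst, ht.2⟩ z (by linarith)
  obtain ⟨m', hm'_pos, hm'⟩ := hFm.exists_pos_add_exp_mul hm hΦl hl (hΦ_pos z) hη
    (lt_add_of_le_of_pos (le_abs_self lam) one_pos)
  exact hm'_pos.not_ge (hm'.nonpos_of_forall_le hst fun τ hτ y =>
    hmin (a := (τ, y)) ⟨⟨hτ.1, hτ.2.trans ht.2⟩, mem_univ _⟩)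

end MinimumPrinciple

section SecondOrderOperators

theorem hasDerivAt_const_add_smul {E : Type*} [NormedAddCommGroup E] [NormedSpace ℝ E] (x v : E)
    (τ : ℝ) : HasDerivAt (fun σ : ℝ => x + σ • v) v τ := by
  simpa using ((hasDerivAt_id τ).smul_const v).const_add x

theorem hasSecondLineDerivAt_of_contDiff {E : Type*} [NormedAddCommGroup E] [NormedSpace ℝ E]
    {f : E → ℝ} (hf : ContDiff ℝ 2 f) (x v : E) :
    HasSecondLineDerivAt f (fderiv ℝ (fderiv ℝ f) x v v) x v := by
  have hline := hasDerivAt_const_add_smul x v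
  have hdiff : Differentiable ℝ f := hf.differentiable (by norm_num)
  have hdiff' : Differentiable ℝ (fderiv ℝ f) :=
    (hf.fderiv_right (m := 1) (by norm_num)).differentiable one_ne_zero
  refine ⟨fun τ => fderiv ℝ f (x + τ • v) v,
    .of_forall fun τ => (hdiff _).hasFDerivAt.comp_hasDerivAt τ (hline τ), ?_⟩
  have hcomp := (hdiff' (x + (0 : ℝ) • v)).hasFDerivAt.comp_hasDerivAt 0 (hline 0)
  simpa using hcomp.clm_apply (hasDerivAt_const 0 v)

theorem euclidean_clm_apply_eq_sum {F : Type*} [NormedAddCommGroup F] [NormedSpace ℝ F]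
    {d : ℕ} (L : Euc d →L[ℝ] F) (v : Euc d) : L v = ∑ i, v i • L (EuclideanSpace.single i 1) := by
  conv_lhs => rw [← (EuclideanSpace.basisFun (Fin d) ℝ).sum_repr v]
  simp

theorem hess_eq_fderiv_fderiv {d : ℕ} {f : Euc d → ℝ} (hf : ContDiff ℝ 2 f) (x : Euc d)
    (i j : Fin d) : hess d f x i j =
      fderiv ℝ (fderiv ℝ f) x (EuclideanSpace.single i 1) (EuclideanSpace.single j 1) := by
  have hdiff' : DifferentiableAt ℝ (fderiv ℝ f) x :=
    (hf.fderiv_right (m := 1) (by norm_num)).differentiable one_ne_zero x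
  simp [hess, fderiv_clm_apply hdiff' (differentiableAt_const _)]

theorem fderiv_fderiv_apply_self_eq_sum_hess {d : ℕ} {f : Euc d → ℝ} (hf : ContDiff ℝ 2 f)
    (x v : Euc d) :
    fderiv ℝ (fderiv ℝ f) x v v = ∑ i, ∑ j, v i * v j * hess d f x i j := by
  simp only [hess_eq_fderiv_fderiv hf]
  rw [euclidean_clm_apply_eq_sum (fderiv ℝ (fderiv ℝ f) x) v, sum_apply]
  refine Finset.sum_congr rfl fun i _ => ?_
  rw [smul_apply, euclidean_clm_apply_eq_sum _ v, Finset.smul_sum]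
  simp only [smul_eq_mul, mul_assoc]

open scoped MatrixOrder Matrix.Norms.L2Operator in
theorem exists_eq_sum_mul_of_posSemidef {ι : Type*} [Fintype ι] {A : ι → ι → ℝ}
    (hA : (Matrix.of A).PosSemidef) :
    ∃ ξ : ι → EuclideanSpace ℝ ι, ∀ i j, A i j = ∑ k, ξ k i * ξ k j := by
  classical
  obtain ⟨B, hB⟩ := CStarAlgebra.nonneg_iff_eq_star_mul_self.1 hA.nonneg
  refine ⟨fun k => WithLp.toLp 2 (B k), fun i j => ?_⟩
  simpa [Matrix.mul_apply] using congr_fun₂ hB i j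

theorem hasParabolicDerivAt_of_contDiff {d : ℕ} {ι : Type*} [Fintype ι]
    {Q : ℝ → Euc d → Fin d → Fin d → ℝ} {b : ℝ → Euc d → Fin d → ℝ} {w : ℝ → Euc d → ℝ}
    {wt t : ℝ} {x : Euc d} {ξ : ι → Euc d} (hξ : ∀ i j, Q t x i j = ∑ k, ξ k i * ξ k j)
    (hwt : HasDerivAt (fun τ => w τ x) wt t) (hw : ContDiff ℝ 2 (w t)) :
    HasParabolicDerivAt (WithLp.toLp 2 (b t x)) ξ w
      (wt - Aop d Q b (fun _ _ => 0) t (w t) x) t x := by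
  refine ⟨wt, _, _, hwt, (hw.differentiable (by norm_num) x).hasFDerivAt.hasLineDerivAt _,
    fun k => hasSecondLineDerivAt_of_contDiff hw x (ξ k), ?_⟩
  have hdiffusion : ∑ k, fderiv ℝ (fderiv ℝ (w t)) x (ξ k) (ξ k) =
      ∑ i, ∑ j, Q t x i j * hess d (w t) x i j := by
    simp only [fderiv_fderiv_apply_self_eq_sum_hess hw, hξ, Finset.sum_mul]
    rw [Finset.sum_comm]
    exact Finset.sum_congr rfl fun i _ => Finset.sum_comm
  rw [hdiffusion, euclidean_clm_apply_eq_sum]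
  simp only [Aop, smul_eq_mul]
  ring

/-- `φ` is a Lyapunov function, with growth rate `lam` over the times in `J`, for the operator with
diffusion `Q`, drift `b` and no potential. -/
structure IsLyapunovOn (d : ℕ) (Q : ℝ → Euc d → Fin d → Fin d → ℝ) (b : ℝ → Euc d → Fin d → ℝ)
    (J : Set ℝ) (lam : ℝ) (φ : Euc d → ℝ) : Prop where
  contDiff : ContDiff ℝ 2 φ
  pos : ∀ x, 0 < φ x
  tendsto : Tendsto φ (cocompact (Euc d)) atTop
  le : ∀ t ∈ J, ∀ x, Aop d Q b (fun _ _ => 0) t φ x ≤ lam * φ x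

theorem IsLyapunovOn.exists_hasParabolicDerivAt {d : ℕ} {ι : Type*} [Fintype ι]
    {Q : ℝ → Euc d → Fin d → Fin d → ℝ} {b : ℝ → Euc d → Fin d → ℝ} {J : Set ℝ} {lam t : ℝ}
    {φ : Euc d → ℝ} (hφ : IsLyapunovOn d Q b J lam φ) (ht : t ∈ J) {x : Euc d} {ξ : ι → Euc d}
    (hξ : ∀ i j, Q t x i j = ∑ k, ξ k i * ξ k j) :
    ∃ l, -(lam * φ x) ≤ l ∧
      HasParabolicDerivAt (WithLp.toLp 2 (b t x)) ξ (fun _ => φ) l t x := by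
  refine ⟨_, ?_, hasParabolicDerivAt_of_contDiff hξ (hasDerivAt_const t (φ x)) hφ.contDiff⟩
  linarith [hφ.le t ht x]

theorem IsClassicalSolution.hasParabolicDerivAt {d : ℕ} {ι : Type*} [Fintype ι]
    {Q : ℝ → Euc d → Fin d → Fin d → ℝ} {b : ℝ → Euc d → Fin d → ℝ} {s t : ℝ} {f : Euc d → ℝ}
    {u : ℝ → Euc d → ℝ} (hu : IsClassicalSolution d Q b (fun _ _ => 0) s f u) (hst : s < t)
    {x : Euc d} {ξ : ι → Euc d} (hξ : ∀ i j, Q t x i j = ∑ k, ξ k i * ξ k j) :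
    HasParabolicDerivAt (WithLp.toLp 2 (b t x)) ξ u 0 t x := by
  have hderiv := hasParabolicDerivAt_of_contDiff (b := b) hξ (hu.tdiff t hst x).hasDerivAt
    (hu.xdiff t hst)
  rwa [hu.pde t hst x, sub_self] at hderiv

theorem IsClassicalSolution.nonneg {d : ℕ} {Q : ℝ → Euc d → Fin d → Fin d → ℝ}
    {b : ℝ → Euc d → Fin d → ℝ} {s T lam M : ℝ} {φ g : Euc d → ℝ} {v : ℝ → Euc d → ℝ}
    (hQ : ∀ t ∈ Ioc s T, ∀ x, (Matrix.of (Q t x)).PosSemidef)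
    (hφ : IsLyapunovOn d Q b (Ioc s T) lam φ)
    (hv : IsClassicalSolution d Q b (fun _ _ => 0) s g v)
    (hbound : ∀ t ∈ Icc s T, ∀ x, M ≤ v t x) (hg : ∀ x, 0 ≤ g x) :
    ∀ t ∈ Icc s T, ∀ x, 0 ≤ v t x := by
  refine nonneg_of_parabolic_supersolution (ι := Fin d) (lam := lam)
    (hv.cont.mono (prod_mono_left Icc_subset_Ici_self)) hbound
    (fun x => (hg x).trans_eq (hv.init x).symm) hφ.contDiff.continuous hφ.pos hφ.tendsto
    fun t ht x _ => ?_
  obtain ⟨ξ, hξ⟩ := exists_eq_sum_mul_of_posSemidef (hQ t ht x)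
  obtain ⟨l, hl, hφl⟩ := hφ.exists_hasParabolicDerivAt ht hξ
  exact ⟨_, ξ, 0, l, hv.hasParabolicDerivAt ht.1 hξ, le_rfl, hφl, hl⟩

end SecondOrderOperators

section Drift

theorem inner_sub_le_of_inner_fderiv_le {E : Type*} [NormedAddCommGroup E] [InnerProductSpace ℝ E]
    {V : E → E} {r : ℝ} (hV : Differentiable ℝ V)
    (hV' : ∀ x ξ, inner ℝ ξ (fderiv ℝ V x ξ) ≤ r * ‖ξ‖ ^ 2) (x y : E) :
    inner ℝ (x - y) (V x - V y) ≤ r * ‖x - y‖ ^ 2 := by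
  have hline (τ : ℝ) : HasDerivAt (fun σ : ℝ => inner ℝ (x - y) (V (y + σ • (x - y))))
      (inner ℝ (x - y) (fderiv ℝ V (y + τ • (x - y)) (x - y))) τ := by
    simpa using (hasDerivAt_const τ (x - y)).inner ℝ
      ((hV _).hasFDerivAt.comp_hasDerivAt τ (hasDerivAt_const_add_smul y (x - y) τ))
  have hmean := image_sub_le_mul_sub_of_deriv_le (fun τ => (hline τ).differentiableAt)
    (fun τ => (hline τ).deriv.trans_le (hV' _ _)) (zero_le_one' ℝ)
  simpa [inner_sub_right] using hmean

theorem inner_toLp_sub_le_of_jacobian_le {d : ℕ} {V : Euc d → Fin d → ℝ} {r : ℝ}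
    (hV : ∀ x j, DifferentiableAt ℝ (fun y => V y j) x)
    (hJac : ∀ x ξ : Euc d, (∑ i, ∑ j,
      fderiv ℝ (fun y => V y i) x (EuclideanSpace.single j 1) * ξ i * ξ j) ≤ r * ‖ξ‖ ^ 2)
    (x y : Euc d) :
    inner ℝ (x - y) (WithLp.toLp 2 (V x) - WithLp.toLp 2 (V y)) ≤ r * ‖x - y‖ ^ 2 := by
  have hderiv (z : Euc d) : HasFDerivAt (fun y => WithLp.toLp 2 (V y))
      (fderiv ℝ (fun y => WithLp.toLp 2 (V y)) z) z :=
    (differentiableAt_euclidean.2 (hV z)).hasFDerivAt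
  refine inner_sub_le_of_inner_fderiv_le (fun z => (hderiv z).differentiableAt)
    (fun z ξ => le_of_eq_of_le ?_ (hJac z ξ)) x y
  have hcoord (i : Fin d) : fderiv ℝ (fun y => WithLp.toLp 2 (V y)) z ξ i =
      fderiv ℝ (fun y => V y i) z ξ :=
    DFunLike.congr_fun
      ((EuclideanSpace.proj (𝕜 := ℝ) i).hasFDerivAt.comp z (hderiv z)).fderiv.symm ξ
  simp only [PiLp.inner_apply, hcoord, RCLike.inner_apply, conj_trivial]
  refine Finset.sum_congr rfl fun i _ => ?_
  rw [euclidean_clm_apply_eq_sum, Finset.sum_mul]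
  exact Finset.sum_congr rfl fun j _ => by rw [smul_eq_mul]; ring

end Drift

section Ellipticity

theorem minEig_mul_norm_sq_le {d : ℕ} {A : Fin d → Fin d → ℝ} (hA : 0 < minEig d A) (x : Euc d) :
    minEig d A * ‖x‖ ^ 2 ≤ ∑ i, ∑ j, A i j * x i * x j := by
  rcases eq_or_ne x 0 with rfl | hx
  · simp
  have hbdd : BddBelow {r : ℝ | ∃ ξ : Euc d, ‖ξ‖ = 1 ∧ ∑ i, ∑ j, A i j * ξ i * ξ j = r} := by
    by_contra hunbdd
    exact hA.ne' (Real.sInf_of_not_bddBelow hunbdd)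
  have hunit := csInf_le hbdd ⟨‖x‖⁻¹ • x, norm_smul_inv_norm hx, rfl⟩
  have hscale : (∑ i, ∑ j, A i j * (‖x‖⁻¹ • x) i * (‖x‖⁻¹ • x) j) * ‖x‖ ^ 2 =
      ∑ i, ∑ j, A i j * x i * x j := by
    have := norm_ne_zero_iff.2 hx
    simp only [Finset.sum_mul, PiLp.smul_apply, smul_eq_mul]
    refine Finset.sum_congr rfl fun i _ => Finset.sum_congr rfl fun j _ => ?_
    field_simp
  rw [← hscale]
  gcongr
  exact hunit

theorem posSemidef_of_minEig_pos {d : ℕ} {A : Fin d → Fin d → ℝ} (hsymm : ∀ i j, A i j = A j i)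
    (hA : 0 < minEig d A) : (Matrix.of A).PosSemidef := by
  refine .of_dotProduct_mulVec_nonneg (Matrix.IsHermitian.ext fun i j => by simp [hsymm i j])
    fun x => ?_
  have hnonneg := (mul_nonneg hA.le (sq_nonneg _)).trans
    (minEig_mul_norm_sq_le hA (WithLp.toLp 2 x))
  convert hnonneg using 1
  simp only [dotProduct, Matrix.mulVec, Matrix.of_apply, Finset.mul_sum, star_trivial]
  exact Finset.sum_congr rfl fun i _ => Finset.sum_congr rfl fun j _ => by ring

end Ellipticity

section Coercivity

theorem tendsto_cocompact_atTop_of_forall_exists_le {E : Type*} [NormedAddCommGroup E]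
    [ProperSpace E] {φ : E → ℝ} (hφ : ∀ M : ℝ, ∃ R : ℝ, ∀ x, R ≤ ‖x‖ → M ≤ φ x) :
    Tendsto φ (cocompact E) atTop := by
  refine tendsto_atTop.2 fun M => ?_
  obtain ⟨R, hR⟩ := hφ M
  exact (tendsto_norm_cocompact_atTop.eventually_ge_atTop R).mono hR

theorem tendsto_fst_add_snd_cocompact_atTop {X : Type*} [TopologicalSpace X] {φ : X → ℝ}
    (hφ : Tendsto φ (cocompact X) atTop) (hφ_nonneg : ∀ x, 0 ≤ φ x) :
    Tendsto (fun z : X × X => φ z.1 + φ z.2) (cocompact (X × X)) atTop := by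
  rw [← Filter.coprod_cocompact, Filter.coprod, tendsto_sup]
  exact ⟨tendsto_atTop_mono (fun z => le_add_of_nonneg_right (hφ_nonneg z.2))
      (hφ.comp tendsto_comap),
    tendsto_atTop_mono (fun z => le_add_of_nonneg_left (hφ_nonneg z.1)) (hφ.comp tendsto_comap)⟩

end Coercivity

section SynchronousCoupling

/-- The distance of the two components of a pair, rescaled by the factor `exp (r * (t - s))` by
which a drift satisfying `⟪x - y, b x - b y⟫ ≤ r * ‖x - y‖ ^ 2` may expand it from time `s` on. -/
def expDist {E : Type*} [SeminormedAddCommGroup E] (r s t : ℝ) (z : E × E) : ℝ :=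
  Real.exp (r * (t - s)) * ‖z.1 - z.2‖

theorem expDist_nonneg {E : Type*} [SeminormedAddCommGroup E] (r s t : ℝ) (z : E × E) :
    0 ≤ expDist r s t z := by
  unfold expDist
  positivity

theorem continuous_expDist {E : Type*} [SeminormedAddCommGroup E] (r s : ℝ) :
    Continuous fun p : ℝ × E × E => expDist r s p.1 p.2 := by
  unfold expDist
  fun_prop

theorem expDist_add_smul_diag {E : Type*} [SeminormedAddCommGroup E] [Module ℝ E] (r s t τ : ℝ)
    (z : E × E) (v : E) : expDist r s t (z + τ • (v, v)) = expDist r s t z := by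
  simp [expDist]

variable {E ι : Type*} [NormedAddCommGroup E] [InnerProductSpace ℝ E] [Fintype ι]

theorem hasLineDerivAt_norm {x : E} (hx : x ≠ 0) (v : E) :
    HasLineDerivAt ℝ (fun y => ‖y‖) (inner ℝ x v / ‖x‖) x v := by
  have hsqrt := (hasDerivAt_const_add_smul x v 0).norm_sq.sqrt (by simpa using hx)
  simp only [Real.sqrt_sq (norm_nonneg _), zero_smul, add_zero] at hsqrt
  rwa [mul_div_mul_left _ _ two_ne_zero] at hsqrt

theorem exists_hasParabolicDerivAt_expDist {r s t : ℝ} {z β : E × E} (hz : z.1 ≠ z.2)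
    (hβ : inner ℝ (z.1 - z.2) (β.1 - β.2) ≤ r * ‖z.1 - z.2‖ ^ 2) (ξ : ι → E) :
    ∃ m ≥ 0, HasParabolicDerivAt β (fun k => (ξ k, ξ k)) (expDist r s) m t z := by
  have hnorm_pos : 0 < ‖z.1 - z.2‖ := norm_pos_iff.2 (sub_ne_zero.2 hz)
  have hnorm : HasParabolicDerivAt β (fun k => (ξ k, ξ k))
      (fun _ y => ‖y.1 - y.2‖) (-(inner ℝ (z.1 - z.2) (β.1 - β.2) / ‖z.1 - z.2‖)) t z :=
    .comp_linearMap (A := LinearMap.fst ℝ E E - LinearMap.snd ℝ E E) (F := fun (_ : ℝ) w => ‖w‖)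
      ⟨0, _, 0, hasDerivAt_const _ _, hasLineDerivAt_norm (sub_ne_zero.2 hz) _,
        fun k => .of_invariant fun τ => by simp, by simp⟩
  refine ⟨_, ?_, .mul_of_invariant (fun _ _ => rfl)
    (.of_time (hasDerivAt_exp_const_mul_sub r s t)) hnorm⟩
  have hquot : inner ℝ (z.1 - z.2) (β.1 - β.2) / ‖z.1 - z.2‖ ≤ r * ‖z.1 - z.2‖ := by
    rw [div_le_iff₀ hnorm_pos]
    linarith
  have := mul_nonneg (Real.exp_pos (r * (t - s))).le (sub_nonneg.2 hquot)
  linarith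

-- Both the radial factor and the diffusion directions `(ξ k, ξ k)` come from driving the two
-- components by the same noise, which leaves `z.1 - z.2` without diffusion.
theorem exists_hasParabolicDerivAt_coupling {u W : ℝ → E → ℝ} {r s t w C : ℝ} {x y β β' : E}
    {ξ : ι → E} (hxy : x ≠ y) (hβ : inner ℝ (x - y) (β - β') ≤ r * ‖x - y‖ ^ 2) (hC : 0 ≤ C)
    (hux : HasParabolicDerivAt β ξ u 0 t x) (huy : HasParabolicDerivAt β' ξ u 0 t y)
    (hW : HasParabolicDerivAt β ξ W w t x) (hw : 0 ≤ w) (hW_nonneg : 0 ≤ W t x) :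
    ∃ m ≥ 0, HasParabolicDerivAt (β, β') (fun k => (ξ k, ξ k))
      (fun τ z => expDist r s τ z * (W τ z.1 + C * expDist r s τ z) - (u τ z.1 - u τ z.2))
      m t (x, y) := by
  obtain ⟨m, hm, hdist⟩ : ∃ m ≥ 0, HasParabolicDerivAt (β, β') (fun k => (ξ k, ξ k))
      (expDist r s) m t (x, y) := exists_hasParabolicDerivAt_expDist hxy hβ ξ
  refine ⟨_, ?_, (hdist.mul_of_invariant (fun k τ => expDist_add_smul_diag r s t τ _ (ξ k))
    ((hW.comp_fst β' ξ y).add (.mul_of_invariant (fun _ _ => rfl)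
      (.of_time (hasDerivAt_const t C)) hdist))).sub
    ((hux.comp_fst β' ξ y).sub (huy.comp_snd β ξ x))⟩
  have := expDist_nonneg r s t (x, y)
  simp only [zero_mul, zero_add, sub_zero]
  positivity

end SynchronousCoupling

section ModulusOfContinuity

theorem exists_forall_dist_lt_le_add {X : Type*} [PseudoMetricSpace X] {g ψ : X → ℝ} {M : ℝ}
    (hg : Continuous g) (hg_nonneg : ∀ x, 0 ≤ g x) (hg_le : ∀ x, g x ≤ M)
    (hψ : Continuous ψ) (hψ_pos : ∀ x, 0 < ψ x) (hψ_lim : Tendsto ψ (cocompact X) atTop) :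
    ∃ δ > 0, ∀ x y, dist x y < δ → g y ≤ g x + ψ x := by
  obtain ⟨K, hK, hKψ⟩ := mem_cocompact.1 (hψ_lim.eventually_ge_atTop M)
  obtain ⟨a, ha, haψ⟩ := hK.exists_forall_le' hψ.continuousOn (a := 0) fun x _ => hψ_pos x
  obtain ⟨δ, hδ, hunif⟩ := Metric.mem_uniformity_dist.1
    (hK.uniformContinuousAt_of_continuousAt g (fun x _ => hg.continuousAt)
      (Metric.dist_mem_uniformity ha))
  refine ⟨δ, hδ, fun x y hxy => ?_⟩
  by_cases hx : x ∈ K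
  · have hclose : dist (g x) (g y) < a := hunif hxy hx
    rw [Real.dist_eq, abs_lt] at hclose
    linarith [haψ x hx]
  · have hfar : M ≤ ψ x := hKψ hx
    linarith [hg_le y, hg_nonneg x]

theorem exists_sub_le_of_norm_fderiv_le {E : Type*} [NormedAddCommGroup E] [NormedSpace ℝ E]
    {f g ψ : E → ℝ} {Mf Mg : ℝ} (hf : Differentiable ℝ f) (hf_le : ∀ x, |f x| ≤ Mf)
    (hfg : ∀ x, ‖fderiv ℝ f x‖ ≤ g x) (hg : Continuous g) (hg_le : ∀ x, g x ≤ Mg)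
    (hψ : Continuous ψ) (hψ_pos : ∀ x, 0 < ψ x) (hψ_lim : Tendsto ψ (cocompact E) atTop) :
    ∃ C ≥ 0, ∀ x y, f x - f y ≤ ‖x - y‖ * (g x + ψ x + C * ‖x - y‖) := by
  have hg_nonneg x : 0 ≤ g x := (norm_nonneg _).trans (hfg x)
  obtain ⟨δ, hδ, hlocal⟩ := exists_forall_dist_lt_le_add hg hg_nonneg hg_le hψ hψ_pos hψ_lim
  have hMf : 0 ≤ Mf := (abs_nonneg _).trans (hf_le 0)
  refine ⟨2 * Mf / δ ^ 2, by positivity, fun x y => ?_⟩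
  have hslope : 0 ≤ g x + ψ x := add_nonneg (hg_nonneg x) (hψ_pos x).le
  rcases lt_or_ge ‖x - y‖ δ with hnear | hfar
  · have hmean : ‖f x - f y‖ ≤ (g x + ψ x) * ‖x - y‖ :=
      (convex_ball x δ).norm_image_sub_le_of_norm_fderiv_le (fun z _ => hf z)
        (fun z hz => (hfg z).trans (hlocal x z (Metric.mem_ball'.1 hz)))
        (by rwa [Metric.mem_ball', dist_eq_norm]) (Metric.mem_ball_self hδ)
    have hcurv : 0 ≤ ‖x - y‖ * (2 * Mf / δ ^ 2 * ‖x - y‖) := by positivity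
    linarith [Real.le_norm_self (f x - f y)]
  · have hsq : 2 * Mf ≤ 2 * Mf / δ ^ 2 * ‖x - y‖ ^ 2 := by
      rw [div_mul_eq_mul_div, le_div_iff₀ (by positivity)]
      gcongr
    have := mul_nonneg (norm_nonneg (x - y)) hslope
    linarith [abs_le.1 (hf_le x), abs_le.1 (hf_le y)]

theorem norm_fderiv_le_of_sub_le {E : Type*} [NormedAddCommGroup E] [NormedSpace ℝ E]
    {f : E → ℝ} {x : E} {B C : ℝ} (hf : DifferentiableAt ℝ f x) (hB : 0 ≤ B)
    (hsub : ∀ y, f x - f y ≤ ‖x - y‖ * (B + C * ‖x - y‖)) : ‖fderiv ℝ f x‖ ≤ B := by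
  have hlower (v : E) : -(B * ‖v‖) ≤ fderiv ℝ f x v := by
    have hright := (hf.hasFDerivAt.hasLineDerivAt v).tendsto_slope_zero_right
    have hbound : Tendsto (fun τ : ℝ => -(‖v‖ * (B + C * (τ * ‖v‖)))) (𝓝[>] 0)
        (𝓝 (-(‖v‖ * (B + C * (0 * ‖v‖))))) :=
      (Continuous.tendsto (by fun_prop) 0).mono_left nhdsWithin_le_nhds
    refine (by ring : -(B * ‖v‖) = -(‖v‖ * (B + C * (0 * ‖v‖)))).trans_le
      (le_of_tendsto_of_tendsto hbound hright (eventually_mem_nhdsWithin.mono fun τ hτ => ?_))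
    have hτ_pos : 0 < τ := hτ
    have hline := hsub (x + τ • v)
    rw [sub_add_cancel_left, norm_neg, norm_smul, Real.norm_of_nonneg hτ_pos.le] at hline
    simp only [smul_eq_mul]
    rw [le_inv_mul_iff₀ hτ_pos]
    linarith
  refine ContinuousLinearMap.opNorm_le_bound _ hB fun v => abs_le.2 ⟨hlower v, ?_⟩
  simpa using neg_le_neg (hlower (-v))

theorem norm_fderiv_le_of_sub_le_expDist_mul {E : Type*} [NormedAddCommGroup E] [NormedSpace ℝ E]
    {f : E → ℝ} {x : E} {r s t B C : ℝ} (hf : DifferentiableAt ℝ f x) (hB : 0 ≤ B)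
    (hsub : ∀ y, f x - f y ≤ expDist r s t (x, y) * (B + C * expDist r s t (x, y))) :
    ‖fderiv ℝ f x‖ ≤ Real.exp (r * (t - s)) * B := by
  refine norm_fderiv_le_of_sub_le (C := Real.exp (r * (t - s)) ^ 2 * C) hf (by positivity)
    fun y => (hsub y).trans_eq ?_
  simp only [expDist]
  ring

end ModulusOfContinuity

section GradientEstimate

variable {d : ℕ} {Q : ℝ → Fin d → Fin d → ℝ} {b : ℝ → Euc d → Fin d → ℝ} {s T lam r : ℝ}
  {φ f g : Euc d → ℝ} {u v : ℝ → Euc d → ℝ}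

theorem IsClassicalSolution.continuous_datum {Q : ℝ → Euc d → Fin d → Fin d → ℝ}
    {c : ℝ → Euc d → ℝ} (hu : IsClassicalSolution d Q b c s f u) : Continuous f := by
  have hslice : Continuous fun x => u s x :=
    hu.cont.comp_continuous (Continuous.prodMk_right s) fun x => ⟨self_mem_Ici, mem_univ x⟩
  simpa only [hu.init] using hslice

theorem continuousOn_uncurry_comp_right {X Y Z : Type*} [TopologicalSpace X] [TopologicalSpace Y]
    [TopologicalSpace Z] {F : X → Y → ℝ} {K : Set X}
    (hF : ContinuousOn (fun p : X × Y => F p.1 p.2) (K ×ˢ univ)) {h : Z → Y} (hh : Continuous h) :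
    ContinuousOn (fun p : X × Z => F p.1 (h p.2)) (K ×ˢ univ) :=
  hF.comp (f := fun p : X × Z => (p.1, h p.2)) (Continuous.continuousOn (by fun_prop))
    fun p hp => ⟨hp.1, mem_univ (h p.2)⟩

theorem IsLyapunovOn.exists_hasParabolicDerivAt_coupling {ι : Type*} [Fintype ι] {J : Set ℝ}
    {t : ℝ} (hφ : IsLyapunovOn d (fun t _ => Q t) b J lam φ) (ht : t ∈ J) (z : Euc d × Euc d)
    {ξ : ι → Euc d} (hξ : ∀ i j, Q t i j = ∑ k, ξ k i * ξ k j) :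
    ∃ l, -(lam * (φ z.1 + φ z.2)) ≤ l ∧
      HasParabolicDerivAt (WithLp.toLp 2 (b t z.1), WithLp.toLp 2 (b t z.2))
        (fun k => (ξ k, ξ k)) (fun _ y => φ y.1 + φ y.2) l t z := by
  obtain ⟨l₁, hl₁, hφ₁⟩ := hφ.exists_hasParabolicDerivAt ht (x := z.1) hξ
  obtain ⟨l₂, hl₂, hφ₂⟩ := hφ.exists_hasParabolicDerivAt ht (x := z.2) hξ
  exact ⟨l₁ + l₂, by linarith, (hφ₁.comp_fst _ ξ z.2).add (hφ₂.comp_snd _ ξ z.1)⟩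

theorem IsClassicalSolution.exists_hasParabolicDerivAt_add_lyapunov {ι : Type*} [Fintype ι]
    {Q : ℝ → Euc d → Fin d → Fin d → ℝ} {J : Set ℝ} {t ε : ℝ} {x : Euc d} {ξ : ι → Euc d}
    (hv : IsClassicalSolution d Q b (fun _ _ => 0) s g v) (hφ : IsLyapunovOn d Q b J lam φ)
    (ht : t ∈ J) (hst : s < t) (hξ : ∀ i j, Q t x i j = ∑ k, ξ k i * ξ k j) (hε : 0 < ε) :
    ∃ w ≥ 0, HasParabolicDerivAt (WithLp.toLp 2 (b t x)) ξ
      (fun τ y => v τ y + ε * (Real.exp ((lam + 1) * (τ - s)) * φ y)) w t x := by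
  obtain ⟨l, hl, hφl⟩ := hφ.exists_hasParabolicDerivAt ht hξ
  obtain ⟨w, hw, hW⟩ := (hv.hasParabolicDerivAt hst hξ).exists_pos_add_exp_mul (s := s)
    le_rfl hφl hl (hφ.pos x) hε (lt_add_one lam)
  exact ⟨w, hw.le, hW⟩

theorem IsClassicalSolution.sub_le_expDist_mul {W : ℝ → Euc d → ℝ} {C M : ℝ}
    (hQ : ∀ t ∈ Ioc s T, (Matrix.of (Q t)).PosSemidef)
    (hφ : IsLyapunovOn d (fun t _ => Q t) b (Ioc s T) lam φ)
    (hb : ∀ t ∈ Ioc s T, ∀ x y, inner ℝ (x - y) (WithLp.toLp 2 (b t x) - WithLp.toLp 2 (b t y)) ≤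
      r * ‖x - y‖ ^ 2)
    (hu : IsClassicalSolution d (fun t _ => Q t) b (fun _ _ => 0) s f u)
    (hu_le : ∀ t ∈ Icc s T, ∀ x, |u t x| ≤ M)
    (hW_cont : ContinuousOn (fun p : ℝ × Euc d => W p.1 p.2) (Icc s T ×ˢ univ))
    (hW_nonneg : ∀ t ∈ Icc s T, ∀ x, 0 ≤ W t x)
    (hW : ∀ t ∈ Ioc s T, ∀ x, ∀ ξ : Fin d → Euc d, (∀ i j, Q t i j = ∑ k, ξ k i * ξ k j) →
      ∃ w ≥ 0, HasParabolicDerivAt (WithLp.toLp 2 (b t x)) ξ W w t x)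
    (hC : 0 ≤ C) (hfW : ∀ x y, f x - f y ≤ ‖x - y‖ * (W s x + C * ‖x - y‖)) :
    ∀ t ∈ Icc s T, ∀ x y, u t x - u t y ≤
      expDist r s t (x, y) * (W t x + C * expDist r s t (x, y)) := by
  suffices hgap : ∀ t ∈ Icc s T, ∀ z : Euc d × Euc d,
      0 ≤ expDist r s t z * (W t z.1 + C * expDist r s t z) - (u t z.1 - u t z.2) from
    fun t ht x y => sub_nonneg.1 (hgap t ht (x, y))
  have hu_cont : ContinuousOn (fun p : ℝ × Euc d => u p.1 p.2) (Icc s T ×ˢ univ) :=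
    hu.cont.mono (prod_mono_left Icc_subset_Ici_self)
  have hexpDist_cont := (continuous_expDist (E := Euc d) r s).continuousOn (s := Icc s T ×ˢ univ)
  refine nonneg_of_parabolic_supersolution (ι := Fin d) (lam := lam) (M := -(2 * M))
    ((hexpDist_cont.mul ((continuousOn_uncurry_comp_right hW_cont continuous_fst).add
        (hexpDist_cont.const_smul C))).sub
      ((continuousOn_uncurry_comp_right hu_cont continuous_fst).sub
        (continuousOn_uncurry_comp_right hu_cont continuous_snd)))
    (fun t ht z => ?_) (fun z => ?_)
    ((hφ.contDiff.continuous.comp continuous_fst).add (hφ.contDiff.continuous.comp continuous_snd))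
    (fun z => add_pos (hφ.pos _) (hφ.pos _))
    (tendsto_fst_add_snd_cocompact_atTop hφ.tendsto fun x => (hφ.pos x).le) ?_
  · have := mul_nonneg (expDist_nonneg r s t z)
      (add_nonneg (hW_nonneg t ht z.1) (mul_nonneg hC (expDist_nonneg r s t z)))
    linarith [abs_le.1 (hu_le t ht z.1), abs_le.1 (hu_le t ht z.2)]
  · simpa [expDist, hu.init] using hfW z.1 z.2
  · rintro t ht ⟨x, y⟩ hneg
    have hxy : x ≠ y := by
      rintro rfl
      simp [expDist] at hneg
    obtain ⟨ξ, hξ⟩ := exists_eq_sum_mul_of_posSemidef (hQ t ht)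
    obtain ⟨w, hw, hWx⟩ := hW t ht x ξ hξ
    obtain ⟨m, hm, hgap⟩ := exists_hasParabolicDerivAt_coupling hxy (hb t ht x y) hC
      (hu.hasParabolicDerivAt ht.1 hξ) (hu.hasParabolicDerivAt ht.1 hξ) hWx hw
      (hW_nonneg t (Ioc_subset_Icc_self ht) x)
    obtain ⟨l, hl, hφl⟩ := hφ.exists_hasParabolicDerivAt_coupling ht (x, y) hξ
    exact ⟨_, _, m, l, hgap, hm, hφl, hl⟩

theorem gradient_estimate_p_one_general (hsT : s < T)
    (hQ : ∀ t ∈ Ioc s T, (Matrix.of (Q t)).PosSemidef)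
    (hφ : IsLyapunovOn d (fun t _ => Q t) b (Ioc s T) lam φ)
    (hb : ∀ t ∈ Ioc s T, ∀ x y, inner ℝ (x - y) (WithLp.toLp 2 (b t x) - WithLp.toLp 2 (b t y)) ≤
      r * ‖x - y‖ ^ 2)
    (hf : Differentiable ℝ f) (hfg : ∀ x, ‖fderiv ℝ f x‖ ≤ g x)
    (hu : IsClassicalSolution d (fun t _ => Q t) b (fun _ _ => 0) s f u)
    (hu_bdd : BoundedOnStrips d s u)
    (hv : IsClassicalSolution d (fun t _ => Q t) b (fun _ _ => 0) s g v)
    (hv_bdd : BoundedOnStrips d s v) (x : Euc d) :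
    ‖fderiv ℝ (u T) x‖ ≤ Real.exp (r * (T - s)) * v T x := by
  obtain ⟨Mu, hMu⟩ := hu_bdd T hsT
  obtain ⟨Mv, hMv⟩ := hv_bdd T hsT
  have hs_mem : s ∈ Icc s T := left_mem_Icc.2 hsT.le
  have hT_mem : T ∈ Icc s T := right_mem_Icc.2 hsT.le
  have hv_nonneg : ∀ t ∈ Icc s T, ∀ x, 0 ≤ v t x :=
    hv.nonneg (fun t ht _ => hQ t ht) hφ (fun t ht x => (abs_le.1 (hMv t ht x)).1)
      fun x => (norm_nonneg _).trans (hfg x)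
  have hφ_cont := hφ.contDiff.continuous
  have hv_cont : ContinuousOn (fun p : ℝ × Euc d => v p.1 p.2) (Icc s T ×ˢ univ) :=
    hv.cont.mono (prod_mono_left Icc_subset_Ici_self)
  refine le_of_forall_pos_le_add_mul
    (c := Real.exp (r * (T - s)) * (Real.exp ((lam + 1) * (T - s)) * φ x)) fun ε hε => ?_
  obtain ⟨C, hC, hfC⟩ := exists_sub_le_of_norm_fderiv_le (ψ := fun x => ε * φ x) hf
    (fun x => hu.init x ▸ hMu s hs_mem x) hfg hv.continuous_datum
    (fun x => (le_abs_self _).trans (hv.init x ▸ hMv s hs_mem x))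
    (hφ_cont.const_smul ε) (fun x => mul_pos hε (hφ.pos x)) (hφ.tendsto.const_mul_atTop hε)
  set W : ℝ → Euc d → ℝ := fun t x => v t x + ε * (Real.exp ((lam + 1) * (t - s)) * φ x)
  have hW_nonneg : ∀ t ∈ Icc s T, ∀ x, 0 ≤ W t x := fun t ht x =>
    add_nonneg (hv_nonneg t ht x) (mul_pos hε (mul_pos (Real.exp_pos _) (hφ.pos x))).le
  have hcompare := hu.sub_le_expDist_mul (W := W) hQ hφ hb hMu
    (hv_cont.add (Continuous.continuousOn (by fun_prop))) hW_nonneg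
    (fun t ht x ξ hξ => hv.exists_hasParabolicDerivAt_add_lyapunov hφ ht ht.1 hξ hε)
    hC (fun x y => by simpa [W, hv.init] using hfC x y) T hT_mem x
  have hgrad : ‖fderiv ℝ (u T) x‖ ≤ Real.exp (r * (T - s)) * W T x :=
    norm_fderiv_le_of_sub_le_expDist_mul ((hu.xdiff T hsT).differentiable two_ne_zero x)
      (hW_nonneg T hT_mem x) hcompare
  exact hgrad.trans_eq (by simp only [W]; ring)

end GradientEstimate

/-- with `Q = Q(t)`, `c ≡ 0` and `rhat₀ = sup r₀ < ∞`, the first-order pointwise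
gradient estimate `|∇_x u(t,x)| ≤ e^{rhat₀(t−s)} v(t,x)` holds, `v` being the solution with
datum `|∇f|`. -/
theorem gradient_estimate_p_one
    (d : ℕ) (hd : 1 ≤ d) (I : Set ℝ)
    (hI : ∀ ⦃t t' : ℝ⦄, t ∈ I → t ≤ t' → t' ∈ I)
    (Q : ℝ → Fin d → Fin d → ℝ) (b : ℝ → Euc d → Fin d → ℝ)
    (α : ℝ) (hα : α ∈ Ioo (0:ℝ) 1)
    (hQhold : ∀ i j, LocHolderParab d α I (fun t _ => Q t i j))
    (hbhold : ∀ j, LocHolderParab d α I (fun t x => b t x j))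
    (hsymm : ∀ t ∈ I, ∀ i j, Q t i j = Q t j i)
    (ν₀ : ℝ) (hν₀ : 0 < ν₀) (hell : ∀ t ∈ I, ν₀ ≤ minEig d (Q t))
    -- Lyapunov condition (with c ≡ 0)
    (hLyap : ∃ φ : Euc d → ℝ, ContDiff ℝ 2 φ ∧ (∀ x, 0 < φ x) ∧
      (∀ M : ℝ, ∃ R : ℝ, ∀ x : Euc d, R ≤ ‖x‖ → M ≤ φ x) ∧
      (∀ a b' : ℝ, Icc a b' ⊆ I → ∃ lam > 0, ∀ t ∈ Icc a b', ∀ x : Euc d,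
        Aop d (fun t _ => Q t) b (fun _ _ => 0) t φ x ≤ lam * φ x))
    -- smoothness and growth hypotheses on the drift
    (hbdiff : ∀ t ∈ I, ∀ (x : Euc d) (j : Fin d),
      DifferentiableAt ℝ (fun y => b t y j) x)
    (hgradHold : ∃ α' ∈ Ioo (0:ℝ) 1, ∀ j k, LocHolderParab d α' I
      (fun t x => fderiv ℝ (fun y => b t y j) x (EuclideanSpace.single k 1)))
    (C₁ C₂ : ℝ → ℝ) (hC₁ : LocBddOn I C₁) (hC₂ : LocBddOn I C₂)
    (hgrowthQ : ∀ t ∈ I, ∀ x : Euc d,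
      Real.sqrt (∑ i, (∑ j, Q t i j * x j) ^ 2) + (∑ i, Q t i i) ≤
        C₁ t * (1 + ‖x‖ ^ 2) * minEig d (Q t))
    (hgrowthb : ∀ t ∈ I, ∀ x : Euc d,
      (∑ i, b t x i * x i) ≤ C₂ t * (1 + ‖x‖ ^ 2) * minEig d (Q t))
    (r₀ : ℝ → Euc d → ℝ)
    (hJac : ∀ t ∈ I, ∀ (x : Euc d) (ξ : Euc d),
      (∑ i, ∑ j, fderiv ℝ (fun y => b t y i) x (EuclideanSpace.single j 1) * ξ i * ξ j) ≤
        r₀ t x * ‖ξ‖ ^ 2)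
    -- rhat₀ := sup r₀ < +∞
    (rhat₀ : ℝ) (hrhat₀ : ∀ t ∈ I, ∀ x : Euc d, r₀ t x ≤ rhat₀)
    -- data and solutions
    (s : ℝ) (hs : s ∈ I)
    (f : Euc d → ℝ) (hf : ContDiff ℝ 1 f)
    (hfb : ∃ Mf, ∀ x, |f x| ≤ Mf) (hfg : ∃ Mf, ∀ x, ‖fderiv ℝ f x‖ ≤ Mf)
    (u v : ℝ → Euc d → ℝ)
    (hu : IsClassicalSolution d (fun t _ => Q t) b (fun _ _ => 0) s f u)
    (hub : BoundedOnStrips d s u)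
    (hv : IsClassicalSolution d (fun t _ => Q t) b (fun _ _ => 0) s
      (fun x => ‖fderiv ℝ f x‖) v)
    (hvb : BoundedOnStrips d s v) :
    ∀ t, s < t → ∀ x : Euc d,
      ‖fderiv ℝ (u t) x‖ ≤ Real.exp (rhat₀ * (t - s)) * v t x := by
  intro t hst x
  obtain ⟨φ, hφ_diff, hφ_pos, hφ_coercive, hφ_le⟩ := hLyap
  obtain ⟨lam, -, hlam⟩ := hφ_le s t fun τ hτ => hI hs hτ.1
  have hφ : IsLyapunovOn d (fun t _ => Q t) b (Ioc s t) lam φ :=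
    ⟨hφ_diff, hφ_pos, tendsto_cocompact_atTop_of_forall_exists_le hφ_coercive,
      fun τ hτ => hlam τ (Ioc_subset_Icc_self hτ)⟩
  have hQ : ∀ τ ∈ Ioc s t, (Matrix.of (Q τ)).PosSemidef := fun τ hτ =>
    have hτI := hI hs hτ.1.le
    posSemidef_of_minEig_pos (hsymm τ hτI) (hν₀.trans_le (hell τ hτI))
  have hb : ∀ τ ∈ Ioc s t, ∀ y z, inner ℝ (y - z)
      (WithLp.toLp 2 (b τ y) - WithLp.toLp 2 (b τ z)) ≤ rhat₀ * ‖y - z‖ ^ 2 := fun τ hτ =>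
    have hτI := hI hs hτ.1.le
    inner_toLp_sub_le_of_jacobian_le (hbdiff τ hτI) fun y ξ =>
      (hJac τ hτI y ξ).trans (mul_le_mul_of_nonneg_right (hrhat₀ τ hτI y) (sq_nonneg _))
  exact gradient_estimate_p_one_general hst hQ hφ hb (hf.differentiable one_ne_zero)
    (fun _ => le_rfl) hu hub hv hvb x
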